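/- arXiv:2402.00480 — 5 statements merged into one kernel-verified Lean document; each statement's English description precedes it below -/
import Mathlib

section
/- Derivation of the Beltrami–Michell field equation: let U ⊆ ℝ³ be open, ν ∈ ℝ with ν ≠ 1 and ν ≠ −1, let σ : U → ℝ^{3×3} be a twice continuously differentiable symmetric matrix field and f : U → ℝ³ a continuously differentiable vector field such that Div σ = −f on U and inc((1+ν) σ − ν (tr σ) 𝟙) = 0 on U. Then at every point of U: −Δσ − (1/(1+ν)) hess(tr σ) = 2 sym D f + (ν/(1−ν)) (div f) 𝟙. -/
/-!
At a point `x ∈ U`, write `D k m l n = ∂_k ∂_m σ_{ln}(x)`, which is symmetric in `(k, m)` (Schwarz) and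
in `(l, n)` (symmetry of `σ`). For any array with these symmetries, contracting the product of the
two Levi-Civita symbols gives (`inc_contraction`)

`inc τ = -Δτ + 2 sym D Div τ - hess (tr τ) + (Δ tr τ - div Div τ) 𝟙`.

For `τ = (1+ν) σ - ν (tr σ) 𝟙` and `Div σ = -f` the equation `inc τ = 0` becomes

`-(1+ν) Δσ - hess (tr σ) - 2 (1+ν) sym D f + (Δ tr σ + (1+ν) div f) 𝟙 = 0`,

whose trace is `(1-ν) Δ tr σ + (1+ν) div f = 0`. Eliminating `Δ tr σ` and dividing by `1+ν` gives the
claim.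
-/

noncomputable section
open scoped BigOperators
open MeasureTheory

/-- Points of `ℝ³`. -/
abbrev V3 : Type := Fin 3 → ℝ

/-- `k`-th partial derivative of a scalar field on `ℝ³`. -/
noncomputable def pd (k : Fin 3) (f : V3 → ℝ) (x : V3) : ℝ :=
  fderiv ℝ f x (Pi.single k 1)

/-- Levi-Civita symbol on `Fin 3`. -/
noncomputable def eps3 (i j k : Fin 3) : ℝ :=
  (((j.val : ℝ) - (i.val : ℝ)) * ((k.val : ℝ) - (i.val : ℝ)) * ((k.val : ℝ) - (j.val : ℝ))) / 2

/-- Trace of a matrix field. -/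
noncomputable def trM (σ : V3 → Fin 3 → Fin 3 → ℝ) (x : V3) : ℝ := ∑ i, σ x i i

/-- Row-wise divergence of a matrix field: `(Div σ)_i = Σ_j ∂_j σ_{ij}`. -/
noncomputable def DivM (σ : V3 → Fin 3 → Fin 3 → ℝ) (x : V3) (i : Fin 3) : ℝ :=
  ∑ j, pd j (fun y => σ y i j) x

/-- Divergence of a vector field. -/
noncomputable def divV (v : V3 → Fin 3 → ℝ) (x : V3) : ℝ :=
  ∑ i, pd i (fun y => v y i) x

/-- Laplacian of a scalar field. -/
noncomputable def lapS (f : V3 → ℝ) (x : V3) : ℝ := ∑ k, pd k (pd k f) x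

/-- Hessian of a scalar field. -/
noncomputable def hessS (f : V3 → ℝ) (x : V3) (i j : Fin 3) : ℝ := pd i (pd j f) x

/-- Componentwise Laplacian of a matrix field. -/
noncomputable def lapM (σ : V3 → Fin 3 → Fin 3 → ℝ) (x : V3) (i j : Fin 3) : ℝ :=
  ∑ k, pd k (pd k (fun y => σ y i j)) x

/-- `div Div σ = Σ_{i,j} ∂_i ∂_j σ_{ij}`. -/
noncomputable def divDivM (σ : V3 → Fin 3 → Fin 3 → ℝ) (x : V3) : ℝ :=
  ∑ i, ∑ j, pd i (pd j (fun y => σ y i j)) x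

/-- `(sym (D Div σ))_{ij} = (∂_j (Div σ)_i + ∂_i (Div σ)_j)/2`. -/
noncomputable def symDDivM (σ : V3 → Fin 3 → Fin 3 → ℝ) (x : V3) (i j : Fin 3) : ℝ :=
  (pd j (fun y => DivM σ y i) x + pd i (fun y => DivM σ y j) x) / 2

/-- Symmetrised gradient of a vector field: `(sym D f)_{ij} = (∂_j f_i + ∂_i f_j)/2`. -/
noncomputable def symDV (f : V3 → Fin 3 → ℝ) (x : V3) (i j : Fin 3) : ℝ :=
  (pd j (fun y => f y i) x + pd i (fun y => f y j) x) / 2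

/-- Incompatibility operator `(inc σ)_{ij} = Σ ε_{ikl} ε_{jmn} ∂_k ∂_m σ_{ln}`. -/
noncomputable def incM (σ : V3 → Fin 3 → Fin 3 → ℝ) (x : V3) (i j : Fin 3) : ℝ :=
  ∑ k, ∑ l, ∑ m, ∑ n, eps3 i k l * eps3 j m n * pd k (pd m (fun y => σ y l n)) x

/-- Row-wise curl of a matrix field: `(Curl σ)_{ij} = Σ_{k,l} ε_{jkl} ∂_k σ_{il}`. -/
noncomputable def CurlM (σ : V3 → Fin 3 → Fin 3 → ℝ) (x : V3) (i j : Fin 3) : ℝ :=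
  ∑ k, ∑ l, eps3 j k l * pd k (fun y => σ y i l) x

/-- Kronecker delta / identity matrix entry. -/
noncomputable def idd (i j : Fin 3) : ℝ := if i = j then 1 else 0

lemma pd_differentiableAt {g : V3 → ℝ} {x : V3} (hg : ContDiffAt ℝ 2 g x) (m : Fin 3) :
    DifferentiableAt ℝ (pd m g) x := by
  have h : ContDiffAt ℝ 1 (fderiv ℝ g) x := hg.fderiv_right (by norm_num)
  exact (h.differentiableAt (by norm_num)).clm_apply (differentiableAt_const _)

lemma pd_comm {g : V3 → ℝ} {x : V3} (hg : ContDiffAt ℝ 2 g x) (k m : Fin 3) :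
    pd k (pd m g) x = pd m (pd k g) x := by
  have h : ContDiffAt ℝ 1 (fderiv ℝ g) x := hg.fderiv_right (by norm_num)
  have hd := h.differentiableAt (by norm_num)
  have key : ∀ a b : Fin 3, pd a (pd b g) x
      = fderiv ℝ (fderiv ℝ g) x (Pi.single a 1) (Pi.single b 1) := by
    intro a b
    change fderiv ℝ (fun y => fderiv ℝ g y (Pi.single b 1)) x (Pi.single a 1) = _
    rw [fderiv_clm_apply hd (differentiableAt_const _)]
    simp
  rw [key, key]
  exact (hg.isSymmSndFDerivAt (by simp)).eq _ _

lemma pd_congr {g h : V3 → ℝ} {x : V3} (e : g =ᶠ[nhds x] h) (k : Fin 3) : pd k g x = pd k h x := by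
  unfold pd
  rw [e.fderiv_eq]

lemma pd_neg (g : V3 → ℝ) (x : V3) (k : Fin 3) : pd k (fun y => -g y) x = -pd k g x := by
  simp [pd]

lemma pd_sum {F : Fin 3 → V3 → ℝ} {x : V3} (hF : ∀ i, DifferentiableAt ℝ (F i) x) (k : Fin 3) :
    pd k (fun y => ∑ i, F i y) x = ∑ i, pd k (F i) x := by
  unfold pd
  rw [fderiv_fun_sum (fun i _ => hF i)]
  simp

lemma pd_lin {g h : V3 → ℝ} {x : V3} (hg : DifferentiableAt ℝ g x) (hh : DifferentiableAt ℝ h x)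
    (a b : ℝ) (k : Fin 3) :
    pd k (fun y => a * g y - b * h y) x = a * pd k g x - b * pd k h x := by
  unfold pd
  rw [fderiv_fun_sub (hg.const_mul a) (hh.const_mul b), fderiv_const_mul hg, fderiv_const_mul hh]
  simp

/-- The contraction of two Levi-Civita symbols that expresses `inc` through `Δ`, `sym D Div`,
`hess tr` and `div Div`; the entry `T k m l n` stands for `∂_k ∂_m τ_{ln}`. -/
lemma inc_contraction (T : Fin 3 → Fin 3 → Fin 3 → Fin 3 → ℝ)
    (h1 : ∀ k m l n, T k m l n = T m k l n) (h2 : ∀ k m l n, T k m l n = T k m n l)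
    (i j : Fin 3) :
    ∑ k, ∑ l, ∑ m, ∑ n, eps3 i k l * eps3 j m n * T k m l n
      = -(∑ k, T k k i j) + (∑ k, T j k i k) + (∑ k, T i k j k) - (∑ k, T i j k k)
        + ((∑ k, ∑ l, T k k l l) - ∑ k, ∑ l, T k l k l) * idd i j := by
  have a1 := fun l n => h1 1 0 l n
  have a2 := fun l n => h1 2 0 l n
  have a3 := fun l n => h1 2 1 l n
  have b1 := fun k m => h2 k m 1 0
  have b2 := fun k m => h2 k m 2 0
  have b3 := fun k m => h2 k m 2 1
  fin_cases i <;> fin_cases j <;>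
    simp [Fin.sum_univ_three, eps3, idd, a1, a2, a3, b1, b2, b3] <;> ring

/-- **Beltrami–Michell field equation.** If `Div σ = −f` and `inc((1+ν)σ − ν(tr σ)𝟙) = 0`
on an open `U ⊆ ℝ³`, with `σ` C² symmetric, `f` C¹, and `ν ≠ ±1`, then at every point of `U`:
`−Δσ − (1/(1+ν)) hess(tr σ) = 2 sym D f + (ν/(1−ν)) (div f) 𝟙`. -/
theorem beltrami_michell (U : Set V3) (hU : IsOpen U) (ν : ℝ) (hν1 : ν ≠ 1) (hν2 : ν ≠ -1)
    (σ : V3 → Fin 3 → Fin 3 → ℝ) (f : V3 → Fin 3 → ℝ)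
    (hσ : ∀ i j, ContDiffOn ℝ 2 (fun x => σ x i j) U)
    (hsym : ∀ x ∈ U, ∀ i j, σ x i j = σ x j i)
    (hf : ∀ i, ContDiffOn ℝ 1 (fun x => f x i) U)
    (hequi : ∀ x ∈ U, ∀ i, DivM σ x i = -(f x i))
    (hinc : ∀ x ∈ U, ∀ i j,
      incM (fun y i' j' => (1 + ν) * σ y i' j' - ν * trM σ y * idd i' j') x i j = 0) :
    ∀ x ∈ U, ∀ i j,
      -(lapM σ x i j) - (1 / (1 + ν)) * hessS (trM σ) x i j =
        2 * symDV f x i j + (ν / (1 - ν)) * divV f x * idd i j := by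
  intro x hx
  have hn : U ∈ nhds x := hU.mem_nhds hx
  have hC : ∀ y ∈ U, ∀ l n, ContDiffAt ℝ 2 (fun z => σ z l n) y :=
    fun y hy l n => (hσ l n).contDiffAt (hU.mem_nhds hy)
  have hCt : ∀ y ∈ U, ContDiffAt ℝ 2 (trM σ) y := fun y hy =>
    ContDiffAt.sum (fun i _ => hC y hy i i)
  set D : Fin 3 → Fin 3 → Fin 3 → Fin 3 → ℝ :=
    fun k m l n => pd k (pd m (fun y => σ y l n)) x with hD
  have hD1 : ∀ k m l n, D k m l n = D m k l n := fun k m l n => pd_comm (hC x hx l n) k m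
  have hD2 : ∀ k m l n, D k m l n = D k m n l := by
    intro k m l n
    apply pd_congr
    filter_upwards [hU.mem_nhds hx] with y hy
    apply pd_congr
    filter_upwards [hU.mem_nhds hy] with z hz using hsym z hz l n
  have hH : ∀ k m, hessS (trM σ) x k m = ∑ i, D k m i i := by
    intro k m
    have e : pd m (trM σ) =ᶠ[nhds x] fun y => ∑ i, pd m (fun z => σ z i i) y := by
      filter_upwards [hn] with y hy
      exact pd_sum (fun i => (hC y hy i i).differentiableAt (by norm_num)) m
    unfold hessS
    rw [pd_congr e]
    exact pd_sum (fun i => pd_differentiableAt (hC x hx i i) m) k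
  have hF : ∀ k i, pd k (fun y => f y i) x = -∑ j, D k j i j := by
    intro k i
    have e : (fun y => f y i) =ᶠ[nhds x] fun y => -∑ j, pd j (fun z => σ z i j) y := by
      filter_upwards [hn] with y hy
      have := hequi y hy i
      unfold DivM at this
      linarith
    rw [pd_congr e, pd_neg, pd_sum (fun j => pd_differentiableAt (hC x hx i j) j) k]
  have hT : ∀ k m l n, pd k (pd m (fun y => (1 + ν) * σ y l n - ν * trM σ y * idd l n)) x
      = (1 + ν) * D k m l n - ν * idd l n * ∑ i, D k m i i := by
    intro k m l n
    have e : pd m (fun y => (1 + ν) * σ y l n - ν * trM σ y * idd l n) =ᶠ[nhds x]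
        fun y => (1 + ν) * pd m (fun z => σ z l n) y - (ν * idd l n) * pd m (trM σ) y := by
      filter_upwards [hn] with y hy
      rw [← pd_lin ((hC y hy l n).differentiableAt (by norm_num))
        ((hCt y hy).differentiableAt (by norm_num))]
      congr 1
      funext z
      ring
    rw [pd_congr e, pd_lin (pd_differentiableAt (hC x hx l n) m)
      (pd_differentiableAt (hCt x hx) m), ← hH]
    rfl
  have key : ∀ i j, -(1 + ν) * (∑ k, D k k i j) - (∑ k, D i j k k)
      + (1 + ν) * ((∑ k, D j k i k) + ∑ k, D i k j k)
      + ((∑ k, ∑ l, D k k l l) - (1 + ν) * ∑ k, ∑ l, D k l k l) * idd i j = 0 := by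
    intro i j
    have h := hinc x hx i j
    unfold incM at h
    simp only [hT] at h
    rw [inc_contraction (fun k m l n => (1 + ν) * D k m l n - ν * idd l n * ∑ i, D k m i i)
      (fun k m l n => by simp only [hD1 k m])
      (fun k m l n => by simp only [hD2 k m l n, idd, eq_comm (a := l)])] at h
    rw [← h]
    have s := fun k => hD1 j i k k
    clear_value D
    fin_cases i <;> fin_cases j <;> simp [Fin.sum_univ_three, idd] at s ⊢ <;>
      (try simp only [s]) <;> ring
  -- The trace of `key`, which determines the Laplacian of the trace of `σ`.
  have tr : (1 - ν) * (∑ k, ∑ l, D k k l l) = (1 + ν) * ∑ k, ∑ l, D k l k l := by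
    have h0 := key 0 0
    have h1 := key 1 1
    have h2 := key 2 2
    clear_value D
    simp [Fin.sum_univ_three, idd] at h0 h1 h2 ⊢
    linear_combination h0 + h1 + h2
  have hp : 1 + ν ≠ 0 := fun h => hν2 (by linarith)
  have hm : 1 - ν ≠ 0 := fun h => hν1 (by linarith)
  intro i j
  have hk := key i j
  rw [hH]
  simp only [symDV, divV, hF, lapM, Finset.sum_neg_distrib]
  change -(∑ k, D k k i j) - _ = _
  clear_value D
  generalize (∑ k, ∑ l, D k k l l) = L at *
  generalize (∑ k, ∑ l, D k l k l) = M at *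
  field_simp
  linear_combination (1 - ν) * hk - idd i j * tr
end
end

section
/- Symmetrised Beltrami–Michell equation: let U ⊆ ℝ³ be open, ν ∈ ℝ with ν ≠ 1 and ν ≠ −1, let σ : U → ℝ^{3×3} be a twice continuously differentiable symmetric matrix field and f : U → ℝ³ a continuously differentiable vector field such that Div σ = −f on U and inc((1+ν) σ − ν (tr σ) 𝟙) = 0 on U. Then at every point of U: −Δσ − (1/(1+ν)) [hess(tr σ) + (div Div σ) 𝟙] = 2 sym D f + ((1+ν²)/(1−ν²)) (div f) 𝟙. -/
/-!
Write `τ = (1+ν)σ − ν (tr σ) 𝟙`. For symmetric `τ`, the incompatibility operator expands to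
`inc τ = −(Δτ + hess (tr τ) − 2 sym D Div τ + (div Div τ − Δ(tr τ)) 𝟙)`. Inserting `Div σ = −f`,
the hypothesis `inc τ = 0` reads
`(1+ν) Δσ + hess (tr σ) + 2(1+ν) sym D f − ((1+ν) div f + Δ(tr σ)) 𝟙 = 0`,
and its trace is `(1−ν) Δ(tr σ) = −(1+ν) div f`. Eliminating `Δ(tr σ)` between the two gives the
claim, since `ν/(1−ν) + 1/(1+ν) = (1+ν²)/(1−ν²)`.

Everything is thus linear in the numbers `∂_k ∂_l σ_{ij}(x)`. The analytic input is linearity of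
second partial derivatives (`pd_pd_lincomb`) and their symmetry (`pd_pd_comm`); the rest is a
componentwise linear identity.
-/

noncomputable section
open scoped BigOperators
open MeasureTheory

lemma pd_lincomb {g h : V3 → ℝ} {x : V3} (hg : DifferentiableAt ℝ g x)
    (hh : DifferentiableAt ℝ h x) (a b : ℝ) (k : Fin 3) :
    pd k (fun y => a * g y + b * h y) x = a * pd k g x + b * pd k h x := by
  unfold pd
  rw [fderiv_fun_add (hg.const_mul a) (hh.const_mul b), fderiv_const_mul hg, fderiv_const_mul hh]
  simp

lemma pd_congr_s5 {g h : V3 → ℝ} {U : Set V3} (hU : IsOpen U) (H : ∀ y ∈ U, g y = h y)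
    {x : V3} (hx : x ∈ U) (k : Fin 3) : pd k g x = pd k h x := by
  have : g =ᶠ[nhds x] h := Filter.eventuallyEq_of_mem (hU.mem_nhds hx) H
  unfold pd
  rw [this.fderiv_eq]

lemma differentiableAt_of_contDiffOn {g : V3 → ℝ} {U : Set V3} (hU : IsOpen U)
    (hg : ContDiffOn ℝ 2 g U) {x : V3} (hx : x ∈ U) : DifferentiableAt ℝ g x :=
  (hg.contDiffAt (hU.mem_nhds hx)).differentiableAt (by norm_num)

lemma differentiableAt_fderiv_of_contDiffOn {g : V3 → ℝ} {U : Set V3} (hU : IsOpen U)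
    (hg : ContDiffOn ℝ 2 g U) {x : V3} (hx : x ∈ U) : DifferentiableAt ℝ (fderiv ℝ g) x :=
  ((hg.contDiffAt (hU.mem_nhds hx)).fderiv_right (m := 1) (by norm_num)).differentiableAt
    (by norm_num)

lemma differentiableAt_pd {g : V3 → ℝ} {U : Set V3} (hU : IsOpen U)
    (hg : ContDiffOn ℝ 2 g U) {x : V3} (hx : x ∈ U) (k : Fin 3) :
    DifferentiableAt ℝ (pd k g) x :=
  (differentiableAt_fderiv_of_contDiffOn hU hg hx).clm_apply (differentiableAt_const _)

lemma pd_pd_lincomb {g h : V3 → ℝ} {U : Set V3} (hU : IsOpen U) (hg : ContDiffOn ℝ 2 g U)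
    (hh : ContDiffOn ℝ 2 h U) {x : V3} (hx : x ∈ U) (a b : ℝ) (k l : Fin 3) :
    pd k (pd l (fun y => a * g y + b * h y)) x = a * pd k (pd l g) x + b * pd k (pd l h) x := by
  rw [pd_congr_s5 hU (h := fun y => a * pd l g y + b * pd l h y) _ hx k]
  · exact pd_lincomb (differentiableAt_pd hU hg hx l) (differentiableAt_pd hU hh hx l) a b k
  · intro y hy
    exact pd_lincomb (differentiableAt_of_contDiffOn hU hg hy)
      (differentiableAt_of_contDiffOn hU hh hy) a b l

lemma pd_pd_comm {g : V3 → ℝ} {U : Set V3} (hU : IsOpen U) (hg : ContDiffOn ℝ 2 g U)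
    {x : V3} (hx : x ∈ U) (k l : Fin 3) : pd k (pd l g) x = pd l (pd k g) x := by
  have hd := differentiableAt_fderiv_of_contDiffOn hU hg hx
  have key : ∀ k l : Fin 3, pd k (pd l g) x
      = fderiv ℝ (fderiv ℝ g) x (Pi.single k 1) (Pi.single l 1) := by
    intro k l
    change fderiv ℝ (fun y => fderiv ℝ g y (Pi.single l 1)) x (Pi.single k 1) = _
    rw [fderiv_clm_apply hd (differentiableAt_const _)]
    simp
  rw [key, key]
  exact ((hg.contDiffAt (hU.mem_nhds hx)).isSymmSndFDerivAt (by simp)).eq _ _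

lemma contDiffOn_trM {U : Set V3} {σ : V3 → Fin 3 → Fin 3 → ℝ}
    (hσ : ∀ i j, ContDiffOn ℝ 2 (fun x => σ x i j) U) : ContDiffOn ℝ 2 (trM σ) U :=
  ContDiffOn.sum fun i _ => hσ i i

lemma pd_pd_trM {U : Set V3} (hU : IsOpen U) {σ : V3 → Fin 3 → Fin 3 → ℝ}
    (hσ : ∀ i j, ContDiffOn ℝ 2 (fun x => σ x i j) U) {x : V3} (hx : x ∈ U) (k l : Fin 3) :
    pd k (pd l (trM σ)) x = ∑ i, pd k (pd l (fun y => σ y i i)) x := by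
  have e : trM σ = fun y => 1 * (1 * σ y 0 0 + 1 * σ y 1 1) + 1 * σ y 2 2 := by
    funext y
    simp [trM, Fin.sum_univ_three]
  have h01 : ContDiffOn ℝ 2 (fun y => 1 * σ y 0 0 + 1 * σ y 1 1) U :=
    (contDiffOn_const.mul (hσ 0 0)).add (contDiffOn_const.mul (hσ 1 1))
  rw [e, pd_pd_lincomb hU h01 (hσ 2 2) hx, pd_pd_lincomb hU (hσ 0 0) (hσ 1 1) hx,
    Fin.sum_univ_three]
  ring

/-- Differentiating the equilibrium equation `Div σ = −f` once. -/
lemma pd_force {U : Set V3} (hU : IsOpen U) {σ : V3 → Fin 3 → Fin 3 → ℝ} {f : V3 → Fin 3 → ℝ}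
    (hσ : ∀ i j, ContDiffOn ℝ 2 (fun x => σ x i j) U)
    (hequi : ∀ x ∈ U, ∀ i, DivM σ x i = -(f x i)) {x : V3} (hx : x ∈ U) (i k : Fin 3) :
    pd k (fun y => f y i) x = -∑ j, pd k (pd j (fun y => σ y i j)) x := by
  have hd : ∀ j, DifferentiableAt ℝ (pd j (fun y => σ y i j)) x :=
    fun j => differentiableAt_pd hU (hσ i j) hx j
  rw [pd_congr_s5 hU (h := fun y => (-1) * (1 * pd 0 (fun y => σ y i 0) y
      + 1 * pd 1 (fun y => σ y i 1) y) + (-1) * pd 2 (fun y => σ y i 2) y) _ hx k,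
    pd_lincomb (g := fun y => 1 * pd 0 (fun y => σ y i 0) y + 1 * pd 1 (fun y => σ y i 1) y)
      (((hd 0).const_mul 1).add ((hd 1).const_mul 1)) (hd 2),
    pd_lincomb (hd 0) (hd 1), Fin.sum_univ_three]
  · ring
  · intro y hy
    have := hequi y hy i
    simp only [DivM, Fin.sum_univ_three] at this
    linarith

/-- **Symmetrised Beltrami–Michell equation.** If `Div σ = −f` and
`inc((1+ν)σ − ν(tr σ)𝟙) = 0` on an open `U ⊆ ℝ³`, with `σ` C² symmetric, `f` C¹ and
`ν ≠ ±1`, then at every point of `U`: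
`−Δσ − (1/(1+ν))[hess(tr σ) + (div Div σ)𝟙] = 2 sym D f + ((1+ν²)/(1−ν²)) (div f) 𝟙`. -/
theorem symmetrised_beltrami_michell (U : Set V3) (hU : IsOpen U)
    (ν : ℝ) (hν1 : ν ≠ 1) (hν2 : ν ≠ -1)
    (σ : V3 → Fin 3 → Fin 3 → ℝ) (f : V3 → Fin 3 → ℝ)
    (hσ : ∀ i j, ContDiffOn ℝ 2 (fun x => σ x i j) U)
    (hsym : ∀ x ∈ U, ∀ i j, σ x i j = σ x j i)
    (hf : ∀ i, ContDiffOn ℝ 1 (fun x => f x i) U)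
    (hequi : ∀ x ∈ U, ∀ i, DivM σ x i = -(f x i))
    (hinc : ∀ x ∈ U, ∀ i j,
      incM (fun y i' j' => (1 + ν) * σ y i' j' - ν * trM σ y * idd i' j') x i j = 0) :
    ∀ x ∈ U, ∀ i j,
      -(lapM σ x i j) - (1 / (1 + ν)) * (hessS (trM σ) x i j + divDivM σ x * idd i j) =
        2 * symDV f x i j + ((1 + ν ^ 2) / (1 - ν ^ 2)) * divV f x * idd i j := by
  intro x hx
  have hp : 1 + ν ≠ 0 := fun h => hν2 (by linarith)
  have hm : 1 - ν ≠ 0 := fun h => hν1 (by linarith)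
  have hpm : 1 - ν ^ 2 ≠ 0 := by
    have : 1 - ν ^ 2 = (1 + ν) * (1 - ν) := by ring
    rw [this]
    exact mul_ne_zero hp hm
  have hE : ∀ k m l n : Fin 3,
      pd k (pd m (fun y => (1 + ν) * σ y l n - ν * trM σ y * idd l n)) x
        = (1 + ν) * pd k (pd m (fun y => σ y l n)) x
          - ν * idd l n * ∑ i, pd k (pd m (fun y => σ y i i)) x := by
    intro k m l n
    have e : (fun y => (1 + ν) * σ y l n - ν * trM σ y * idd l n)
        = fun y => (1 + ν) * σ y l n + (-(ν * idd l n)) * trM σ y := by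
      funext y
      ring
    rw [e, pd_pd_lincomb hU (hσ l n) (contDiffOn_trM hσ) hx, pd_pd_trM hU hσ hx]
    ring
  have hI := hinc x hx
  simp only [incM, hE] at hI
  simp only [lapM, hessS, divDivM, symDV, divV, pd_pd_trM hU hσ hx, pd_force hU hσ hequi hx]
  have hc : ∀ i j k l, pd k (pd l (fun y => σ y i j)) x = pd l (pd k (fun y => σ y i j)) x :=
    fun i j k l => pd_pd_comm hU (hσ i j) hx k l
  have hs : ∀ i j k l, pd k (pd l (fun y => σ y i j)) x = pd k (pd l (fun y => σ y j i)) x :=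
    fun i j k l => pd_congr_s5 hU
      (fun y hy => pd_congr_s5 hU (fun z hz => hsym z hz i j) hy l) hx k
  -- From here on only the numbers `S i j k l = ∂_k ∂_l σ_{ij}(x)` and their symmetries matter.
  generalize hS : (fun i j k l => pd k (pd l (fun y => σ y i j)) x) = S
  have hS' : ∀ i j k l, pd k (pd l (fun y => σ y i j)) x = S i j k l := by
    intro i j k l
    rw [← hS]
  simp only [hS'] at hI hc hs ⊢
  -- The symmetries orient every index pair increasingly.
  have c10 := fun i j => hc i j 1 0
  have c20 := fun i j => hc i j 2 0
  have c21 := fun i j => hc i j 2 1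
  have s10 := hs 1 0
  have s20 := hs 2 0
  have s21 := hs 2 1
  -- The expanded form of `inc τ = 0`, with `Div σ` in place of `−f`.
  have hJ : ∀ i j, (1 + ν) * ∑ k, S i j k k + ∑ k, S k k i j
      - (1 + ν) * (∑ k, S i k j k + ∑ k, S j k i k)
      + ((1 + ν) * ∑ k, ∑ l, S k l k l - ∑ k, ∑ l, S k k l l) * idd i j = 0 := by
    intro i j
    have h := hI i j
    fin_cases i <;> fin_cases j <;>
      simp [Fin.sum_univ_three, eps3, idd, c10, c20, c21, s10, s20, s21] at h ⊢ <;>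
      linear_combination -h
  have htr : (1 + ν) * ∑ k, ∑ l, S k l k l = (1 - ν) * ∑ k, ∑ l, S k k l l := by
    have h0 := hJ 0 0
    have h1 := hJ 1 1
    have h2 := hJ 2 2
    simp [Fin.sum_univ_three, idd, c10, c20, c21, s10, s20, s21] at h0 h1 h2 ⊢
    linear_combination h0 + h1 + h2
  intro i j
  -- With `d = 1/(1−ν²)`, both fractions are polynomial multiples of `d`.
  obtain ⟨d, hd⟩ : ∃ d : ℝ, d * (1 - ν ^ 2) = 1 := ⟨(1 - ν ^ 2)⁻¹, inv_mul_cancel₀ hpm⟩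
  have e1 : 1 / (1 + ν) = (1 - ν) * d := by
    rw [div_eq_iff hp]
    linear_combination -hd
  have e2 : (1 + ν ^ 2) / (1 - ν ^ 2) = (1 + ν ^ 2) * d := by
    rw [div_eq_iff hpm]
    linear_combination -(1 + ν ^ 2) * hd
  rw [e1, e2, Finset.sum_neg_distrib]
  linear_combination -(d * (1 - ν)) * hJ i j + d * idd i j * htr
    - (-∑ k, S i j k k + ∑ k, S i k j k + ∑ k, S j k i k) * hd
end
end

section
/- Pointwise bound on the skew Curl (Lemma: upper bound of ‖skw Curl σ‖): let U ⊆ ℝ³ be open, let σ : U → ℝ^{3×3} be a continuously differentiable symmetric matrix field, and let ε > 0. Then at every point of U: ‖skw(Curl σ)‖² ≤ ((1+ε)/2) ‖Div σ‖² + ((1+ε)/(2ε)) ‖∇ tr σ‖². -/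
/-!
For symmetric `σ` the off-diagonal entries of `Curl σ - (Curl σ)ᵀ` are, up to sign, the three
components of `∇ tr σ - Div σ` (`curl_sub_curl`), each occurring twice. Hence
`‖skw (Curl σ)‖² = ‖∇ tr σ - Div σ‖² / 2`, and the bound is Young's inequality
`(t - d)² ≤ (1 + ε) d² + (1 + 1/ε) t²` (`young_sub_sq`) applied in each component.
-/

noncomputable section
open scoped BigOperators
open MeasureTheory

theorem young_sub_sq (ε : ℝ) (hε : 0 < ε) (t d : ℝ) :
    (t - d) ^ 2 / 2 ≤ (1 + ε) / 2 * d ^ 2 + (1 + ε) / (2 * ε) * t ^ 2 := by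
  have h : (1 + ε) / 2 * d ^ 2 + (1 + ε) / (2 * ε) * t ^ 2 - (t - d) ^ 2 / 2
      = (t + ε * d) ^ 2 / (2 * ε) := by
    field_simp
    ring
  have h' : 0 ≤ (t + ε * d) ^ 2 / (2 * ε) := by positivity
  linarith

theorem pd_trM (σ : V3 → Fin 3 → Fin 3 → ℝ) (x : V3)
    (hd : ∀ i j, DifferentiableAt ℝ (fun y => σ y i j) x) (k : Fin 3) :
    pd k (trM σ) x = ∑ i, pd k (fun y => σ y i i) x := by
  have h : trM σ = fun y => ∑ i, σ y i i := rfl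
  unfold pd
  rw [h, fderiv_fun_sum (fun i _ => hd i i)]
  simp

/-- The pairs `(i, j)` are `(0, 1)`, `(1, 2)`, `(2, 0)`; the component of `∇ tr σ - Div σ` is the
remaining index. Only the symmetry of the derivatives of `σ` enters. -/
theorem curl_sub_curl (σ : V3 → Fin 3 → Fin 3 → ℝ) (x : V3)
    (hd : ∀ i j, DifferentiableAt ℝ (fun y => σ y i j) x)
    (hs : ∀ k i j, pd k (fun y => σ y i j) x = pd k (fun y => σ y j i) x) :
    CurlM σ x 0 1 - CurlM σ x 1 0 = pd 2 (trM σ) x - DivM σ x 2 ∧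
    CurlM σ x 1 2 - CurlM σ x 2 1 = pd 0 (trM σ) x - DivM σ x 0 ∧
    CurlM σ x 2 0 - CurlM σ x 0 2 = pd 1 (trM σ) x - DivM σ x 1 := by
  simp only [pd_trM σ x hd, CurlM, DivM, eps3, Fin.sum_univ_three, Fin.val_zero, Fin.val_one,
    Fin.val_two]
  have h01 := fun k => hs k 0 1
  have h02 := fun k => hs k 0 2
  have h12 := fun k => hs k 1 2
  simp only [h01, h02, h12]
  push_cast
  refine ⟨?_, ?_, ?_⟩ <;> ring

/-- **Pointwise bound on the skew Curl.** For a C¹ symmetric matrix field `σ` on an open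
`U ⊆ ℝ³` and any `ε > 0`, at every point of `U`:
`‖skw(Curl σ)‖² ≤ ((1+ε)/2) ‖Div σ‖² + ((1+ε)/(2ε)) ‖∇ tr σ‖²`. -/
theorem skw_curl_bound (U : Set V3) (hU : IsOpen U)
    (σ : V3 → Fin 3 → Fin 3 → ℝ)
    (hσ : ∀ i j, ContDiffOn ℝ 1 (fun x => σ x i j) U)
    (hsym : ∀ x ∈ U, ∀ i j, σ x i j = σ x j i)
    (ε : ℝ) (hε : 0 < ε) :
    ∀ x ∈ U,
      (∑ i, ∑ j, ((CurlM σ x i j - CurlM σ x j i) / 2) ^ 2) ≤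
        ((1 + ε) / 2) * (∑ i, (DivM σ x i) ^ 2) +
          ((1 + ε) / (2 * ε)) * (∑ i, (pd i (trM σ) x) ^ 2) := by
  intro x hx
  have hUx : U ∈ nhds x := hU.mem_nhds hx
  have hd : ∀ i j, DifferentiableAt ℝ (fun y => σ y i j) x := fun i j =>
    ((hσ i j).contDiffAt hUx).differentiableAt one_ne_zero
  -- Symmetry holds on a neighbourhood of `x`, so it passes to the derivatives at `x`.
  have hs : ∀ k i j, pd k (fun y => σ y i j) x = pd k (fun y => σ y j i) x := by
    intro k i j
    have h : (fun y => σ y i j) =ᶠ[nhds x] fun y => σ y j i :=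
      Filter.eventually_of_mem hUx fun y hy => hsym y hy i j
    unfold pd
    rw [h.fderiv_eq]
  obtain ⟨h2, h0, h1⟩ := curl_sub_curl σ x hd hs
  have hskw : (∑ i, ∑ j, ((CurlM σ x i j - CurlM σ x j i) / 2) ^ 2)
      = ∑ i, (pd i (trM σ) x - DivM σ x i) ^ 2 / 2 := by
    simp only [Fin.sum_univ_three, ← h0, ← h1, ← h2]
    ring
  rw [hskw, Finset.mul_sum, Finset.mul_sum, ← Finset.sum_add_distrib]
  exact Finset.sum_le_sum fun i _ => young_sub_sq ε hε _ _
end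
end

section
/- Integration-by-parts identity for the gradient of a symmetric tensor field: let σ : ℝ³ → ℝ^{3×3} be a smooth, compactly supported, symmetric matrix field. Then ∫_{ℝ³} ‖Dσ‖² dx = 2 ∫_{ℝ³} ‖Div σ‖² dx − 2 ∫_{ℝ³} ⟨Div σ, ∇ tr σ⟩ dx + ∫_{ℝ³} ‖∇ tr σ‖² dx + ∫_{ℝ³} ( ‖sym(Curl σ)‖² − ‖skw(Curl σ)‖² ) dx. -/
/-!
The proof is pointwise algebra plus one integration by parts. Since
`‖sym C‖² − ‖skw C‖² = ∑ᵢⱼ Cᵢⱼ Cⱼᵢ`, expanding the product of the two Levi-Civita symbols in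
`C = Curl σ` as a determinant of Kronecker deltas gives, for symmetric `σ`,
`‖sym C‖² − ‖skw C‖² = ‖Dσ‖² − A − ‖Div σ‖² + 2⟨Div σ, ∇ tr σ⟩ − ‖∇ tr σ‖²`, where
`A = ∑ᵢⱼₖ ∂ₖσᵢⱼ ∂ⱼσᵢₖ` (`curl_algebra`). It remains to see that `∫ A = ∫ ‖Div σ‖²`, which
follows by exchanging the two derivatives in each summand: `∫ ∂ₖf ∂ⱼg = ∫ ∂ⱼf ∂ₖg` for test
functions `f`, `g` (`integral_pd_mul_pd_comm`).
-/

noncomputable section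
open scoped BigOperators
open MeasureTheory

lemma contDiff_pd {f : V3 → ℝ} (hf : ContDiff ℝ (⊤ : ℕ∞) f) (k : Fin 3) :
    ContDiff ℝ (⊤ : ℕ∞) (pd k f) :=
  (hf.fderiv_right (by simp)).clm_apply contDiff_const

lemma hasCompactSupport_pd {f : V3 → ℝ} (hf : HasCompactSupport f) (k : Fin 3) :
    HasCompactSupport (pd k f) :=
  hf.fderiv_apply ℝ _

lemma pd_comm_s11 {f : V3 → ℝ} (hf : ContDiff ℝ (⊤ : ℕ∞) f) (j k : Fin 3) (x : V3) :
    pd j (pd k f) x = pd k (pd j f) x := by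
  have hd : DifferentiableAt ℝ (fderiv ℝ f) x :=
    (hf.fderiv_right (m := 1) (by norm_cast)).differentiable (by norm_num) x
  have key : ∀ a b : Fin 3,
      pd a (pd b f) x = fderiv ℝ (fderiv ℝ f) x (Pi.single a 1) (Pi.single b 1) := by
    intro a b
    change fderiv ℝ (fun y => fderiv ℝ f y (Pi.single b 1)) x (Pi.single a 1) = _
    rw [fderiv_clm_apply hd (by fun_prop)]
    simp
  rw [key, key]
  exact (hf.contDiffAt.isSymmSndFDerivAt (by simp; norm_cast)) _ _

lemma integral_mul_pd {f g : V3 → ℝ} (hf : ContDiff ℝ (⊤ : ℕ∞) f)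
    (hg : ContDiff ℝ (⊤ : ℕ∞) g) (hfc : HasCompactSupport f) (k : Fin 3) :
    ∫ x, f x * pd k g x = - ∫ x, pd k f x * g x :=
  integral_mul_fderiv_eq_neg_fderiv_mul_of_integrable
    (((contDiff_pd hf k).continuous.mul hg.continuous).integrable_of_hasCompactSupport
      (hasCompactSupport_pd hfc k).mul_right)
    ((hf.continuous.mul (contDiff_pd hg k).continuous).integrable_of_hasCompactSupport
      hfc.mul_right)
    ((hf.continuous.mul hg.continuous).integrable_of_hasCompactSupport hfc.mul_right)
    (fun x _ => hf.differentiable (by simp) x) (fun x _ => hg.differentiable (by simp) x)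

/-- Both sides equal `-∫ f ∂ⱼ∂ₖ g`. -/
lemma integral_pd_mul_pd_comm {f g : V3 → ℝ} (hf : ContDiff ℝ (⊤ : ℕ∞) f)
    (hg : ContDiff ℝ (⊤ : ℕ∞) g) (hfc : HasCompactSupport f) (j k : Fin 3) :
    ∫ x, pd k f x * pd j g x = ∫ x, pd j f x * pd k g x := by
  have h1 := integral_mul_pd hf (contDiff_pd hg j) hfc k
  have h2 := integral_mul_pd hf (contDiff_pd hg k) hfc j
  simp only [pd_comm_s11 hg k j] at h1
  linarith

/-- The pointwise identity, with `d k i j` standing for `∂ₖσᵢⱼ`. -/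
lemma curl_algebra (d : Fin 3 → Fin 3 → Fin 3 → ℝ) (hd : ∀ k i j, d k i j = d k j i) :
    (∑ i, ∑ j, ((∑ k, ∑ l, eps3 j k l * d k i l + ∑ k, ∑ l, eps3 i k l * d k j l) / 2) ^ 2)
      - (∑ i, ∑ j, ((∑ k, ∑ l, eps3 j k l * d k i l - ∑ k, ∑ l, eps3 i k l * d k j l) / 2) ^ 2)
    = (∑ i, ∑ j, ∑ k, d k i j ^ 2) - (∑ i, ∑ j, ∑ k, d k i j * d j i k)
      - (∑ i, (∑ j, d j i j) ^ 2) + 2 * (∑ i, (∑ j, d j i j) * ∑ j, d i j j)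
      - ∑ i, (∑ j, d i j j) ^ 2 := by
  simp only [Fin.sum_univ_three, eps3, Fin.val_zero, Fin.val_one, Fin.val_two]
  simp only [hd _ 1 0, hd _ 2 0, hd _ 2 1]
  push_cast
  ring

/-- **Integration-by-parts identity.** For a smooth, compactly supported, symmetric
matrix field `σ` on `ℝ³`:
`∫ ‖Dσ‖² = 2∫‖Div σ‖² − 2∫⟨Div σ, ∇ tr σ⟩ + ∫‖∇ tr σ‖² + ∫(‖sym Curl σ‖² − ‖skw Curl σ‖²)`. -/
theorem grad_L2_identity
    (σ : V3 → Fin 3 → Fin 3 → ℝ)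
    (hσ : ContDiff ℝ (⊤ : ℕ∞) σ) (hc : HasCompactSupport σ)
    (hsym : ∀ x, ∀ i j, σ x i j = σ x j i) :
    (∫ x : V3, ∑ i, ∑ j, ∑ k, (pd k (fun y => σ y i j) x) ^ 2) =
      2 * (∫ x : V3, ∑ i, (DivM σ x i) ^ 2)
        - 2 * (∫ x : V3, ∑ i, DivM σ x i * pd i (trM σ) x)
        + (∫ x : V3, ∑ i, (pd i (trM σ) x) ^ 2)
        + ∫ x : V3, ((∑ i, ∑ j, ((CurlM σ x i j + CurlM σ x j i) / 2) ^ 2)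
            - ∑ i, ∑ j, ((CurlM σ x i j - CurlM σ x j i) / 2) ^ 2) := by
  have hs : ∀ i j, ContDiff ℝ (⊤ : ℕ∞) (fun y => σ y i j) := fun i j => by
    rw [contDiff_pi] at hσ
    exact contDiff_pi.1 (hσ i) j
  have hsc : ∀ i j, HasCompactSupport (fun y => σ y i j) := fun i j =>
    hc.comp_left (g := fun m : Fin 3 → Fin 3 → ℝ => m i j) rfl
  set d : V3 → Fin 3 → Fin 3 → Fin 3 → ℝ := fun x k i j => pd k (fun y => σ y i j) x with hd
  have hdsym : ∀ x k i j, d x k i j = d x k j i := fun x k i j => by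
    simp only [hd, hsym _ i j]
  have hdcont : Continuous d := by
    refine continuous_pi fun k => continuous_pi fun i => continuous_pi fun j => ?_
    exact (contDiff_pd (hs i j) k).continuous
  have hdsupp : HasCompactSupport d := by
    refine HasCompactSupport.intro hc fun x hx => ?_
    funext k i j
    have hx' : x ∉ tsupport (fun y => σ y i j) := fun h =>
      hx (tsupport_comp_subset (g := fun m : Fin 3 → Fin 3 → ℝ => m i j) rfl σ h)
    have h0 := fderiv_of_notMem_tsupport (𝕜 := ℝ) hx'
    simp [hd, pd, h0]
  -- Every integrand below is a continuous function of `d x` vanishing at `d = 0`.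
  have hint : ∀ Q : (Fin 3 → Fin 3 → Fin 3 → ℝ) → ℝ, Continuous Q → Q 0 = 0 →
      Integrable (fun x => Q (d x)) := fun Q hQ h0 =>
    (hQ.comp hdcont).integrable_of_hasCompactSupport (hdsupp.comp_left h0)
  have htr : ∀ i x, pd i (trM σ) x = ∑ j, d x i j j := fun i x => by
    have : fderiv ℝ (trM σ) x = ∑ j, fderiv ℝ (fun y => σ y j j) x :=
      fderiv_fun_sum fun j _ => (hs j j).differentiable (by simp) x
    simp [pd, this, hd]
  have hA : ∫ x, ∑ i, ∑ j, ∑ k, d x k i j * d x j i k = ∫ x, ∑ i, (∑ j, d x j i j) ^ 2 := by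
    have e : ∀ x, ∑ i, (∑ j, d x j i j) ^ 2 = ∑ i, ∑ j, ∑ k, d x j i j * d x k i k := fun x => by
      simp only [sq, Finset.sum_mul_sum]
    simp only [e]
    have i1 : ∀ i j k, Integrable (fun x => d x k i j * d x j i k) := fun i j k =>
      hint (fun m => m k i j * m j i k) (by fun_prop) (by simp)
    have i2 : ∀ i j k, Integrable (fun x => d x j i j * d x k i k) := fun i j k =>
      hint (fun m => m j i j * m k i k) (by fun_prop) (by simp)
    rw [integral_finsetSum _ fun i _ => integrable_finsetSum _ fun j _ =>
        integrable_finsetSum _ fun k _ => i1 i j k,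
      integral_finsetSum _ fun i _ => integrable_finsetSum _ fun j _ =>
        integrable_finsetSum _ fun k _ => i2 i j k]
    refine Finset.sum_congr rfl fun i _ => ?_
    rw [integral_finsetSum _ fun j _ => integrable_finsetSum _ fun k _ => i1 i j k,
      integral_finsetSum _ fun j _ => integrable_finsetSum _ fun k _ => i2 i j k]
    refine Finset.sum_congr rfl fun j _ => ?_
    rw [integral_finsetSum _ fun k _ => i1 i j k, integral_finsetSum _ fun k _ => i2 i j k]
    exact Finset.sum_congr rfl fun k _ => integral_pd_mul_pd_comm (hs i j) (hs i k) (hsc i j) j k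
  have hG : Integrable (fun x => ∑ i, ∑ j, ∑ k, d x k i j ^ 2) :=
    hint (fun m => ∑ i, ∑ j, ∑ k, m k i j ^ 2) (by fun_prop) (by simp)
  have hAi : Integrable (fun x => ∑ i, ∑ j, ∑ k, d x k i j * d x j i k) :=
    hint (fun m => ∑ i, ∑ j, ∑ k, m k i j * m j i k) (by fun_prop) (by simp)
  have hD : Integrable (fun x => ∑ i, (∑ j, d x j i j) ^ 2) :=
    hint (fun m => ∑ i, (∑ j, m j i j) ^ 2) (by fun_prop) (by simp)
  have hM : Integrable (fun x => ∑ i, (∑ j, d x j i j) * ∑ j, d x i j j) :=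
    hint (fun m => ∑ i, (∑ j, m j i j) * ∑ j, m i j j) (by fun_prop) (by simp)
  have hT : Integrable (fun x => ∑ i, (∑ j, d x i j j) ^ 2) :=
    hint (fun m => ∑ i, (∑ j, m i j j) ^ 2) (by fun_prop) (by simp)
  have hC := fun x => curl_algebra (d x) (hdsym x)
  simp only [htr]
  change (∫ x, ∑ i, ∑ j, ∑ k, d x k i j ^ 2) =
    2 * (∫ x, ∑ i, (∑ j, d x j i j) ^ 2)
      - 2 * (∫ x, ∑ i, (∑ j, d x j i j) * ∑ j, d x i j j)
      + (∫ x, ∑ i, (∑ j, d x i j j) ^ 2)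
      + ∫ x, ((∑ i, ∑ j, ((∑ k, ∑ l, eps3 j k l * d x k i l
            + ∑ k, ∑ l, eps3 i k l * d x k j l) / 2) ^ 2)
          - ∑ i, ∑ j, ((∑ k, ∑ l, eps3 j k l * d x k i l
            - ∑ k, ∑ l, eps3 i k l * d x k j l) / 2) ^ 2)
  simp only [hC]
  rw [integral_sub ?_ hT, integral_add ?_ (hM.const_mul 2), integral_sub ?_ hD,
    integral_sub hG hAi, integral_const_mul, hA]
  · ring
  · exact hG.sub hAi
  · exact (hG.sub hAi).sub hD
  · exact ((hG.sub hAi).sub hD).add (hM.const_mul 2)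
end
end

section
/- Norm equivalence for ‖Dσ‖_{L²} in two dimensions (Lemma): let σ : ℝ² → ℝ^{2×2} be a smooth, compactly supported, symmetric matrix field. Then: (i) for every ε with 1 < ε < 2, min{2−ε, 1−1/ε} · ∫_{ℝ²} ( ‖Div σ‖² + ‖∇ tr σ‖² ) dx ≤ ∫_{ℝ²} ‖Dσ‖² dx; and (ii) for every ε > 0, ∫_{ℝ²} ‖Dσ‖² dx ≤ max{2+ε, 1+1/ε} · ∫_{ℝ²} ( ‖Div σ‖² + ‖∇ tr σ‖² ) dx. -/
/-!
Both bounds rest on two facts about `Rot σ`.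

* Applied to each row of `σ`, the planar div-curl identity reads
  `‖Dσ‖² + 2 N = ‖Div σ‖² + ‖Rot σ‖²`, where `N` is a sum of Jacobian determinants
  `∂₁f ∂₂g - ∂₂f ∂₁g` of entries of `σ`. Such a determinant integrates to zero
  (`integral_jacobian`), so `∫ ‖Dσ‖² = ∫ ‖Div σ‖² + ‖Rot σ‖²`.
* For symmetric `σ`, `Rot σ = R Div σ - ∇⊥ tr σ` pointwise with `R` a rotation.

Young's inequality with parameter `ε` applied to `‖R Div σ - ∇⊥ tr σ‖²` then bounds `‖Rot σ‖²`
from below by `(1 - ε) ‖Div σ‖² + (1 - 1/ε) ‖∇ tr σ‖²` and from above by the same expression with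
plus signs.
-/

noncomputable section
open scoped BigOperators
open MeasureTheory

/-- Points of `ℝ²`. -/
abbrev V2 : Type := Fin 2 → ℝ

/-- `k`-th partial derivative of a scalar field on `ℝ²`. -/
noncomputable def pd2 (k : Fin 2) (f : V2 → ℝ) (x : V2) : ℝ :=
  fderiv ℝ f x (Pi.single k 1)

/-- Trace of a 2×2 matrix field. -/
noncomputable def trM2 (σ : V2 → Fin 2 → Fin 2 → ℝ) (x : V2) : ℝ := ∑ i, σ x i i

/-- Row-wise divergence: `(Div σ)_i = Σ_j ∂_j σ_{ij}`. -/
noncomputable def DivM2 (σ : V2 → Fin 2 → Fin 2 → ℝ) (x : V2) (i : Fin 2) : ℝ :=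
  ∑ j, pd2 j (fun y => σ y i j) x

/-- Laplacian of a scalar field on `ℝ²`. -/
noncomputable def lapS2 (f : V2 → ℝ) (x : V2) : ℝ := ∑ k, pd2 k (pd2 k f) x

/-- Hessian of a scalar field on `ℝ²`. -/
noncomputable def hessS2 (f : V2 → ℝ) (x : V2) (i j : Fin 2) : ℝ := pd2 i (pd2 j f) x

/-- Componentwise Laplacian of a 2×2 matrix field. -/
noncomputable def lapM2 (σ : V2 → Fin 2 → Fin 2 → ℝ) (x : V2) (i j : Fin 2) : ℝ :=
  ∑ k, pd2 k (pd2 k (fun y => σ y i j)) x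

/-- `div Div σ = Σ_{i,j} ∂_i ∂_j σ_{ij}`. -/
noncomputable def divDivM2 (σ : V2 → Fin 2 → Fin 2 → ℝ) (x : V2) : ℝ :=
  ∑ i, ∑ j, pd2 i (pd2 j (fun y => σ y i j)) x

/-- `(sym (D Div σ))_{ij} = (∂_j (Div σ)_i + ∂_i (Div σ)_j)/2`. -/
noncomputable def symDDivM2 (σ : V2 → Fin 2 → Fin 2 → ℝ) (x : V2) (i j : Fin 2) : ℝ :=
  (pd2 j (fun y => DivM2 σ y i) x + pd2 i (fun y => DivM2 σ y j) x) / 2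

/-- Row-wise rotated divergence: `(Rot σ)_i = ∂₁ σ_{i2} − ∂₂ σ_{i1}`. -/
noncomputable def RotM2 (σ : V2 → Fin 2 → Fin 2 → ℝ) (x : V2) (i : Fin 2) : ℝ :=
  pd2 0 (fun y => σ y i 1) x - pd2 1 (fun y => σ y i 0) x

/-- Rotated gradient `∇⊥λ = (∂₂ λ, −∂₁ λ)`. -/
noncomputable def perpGrad (f : V2 → ℝ) (x : V2) : Fin 2 → ℝ :=
  ![pd2 1 f x, -(pd2 0 f x)]

/-- Action of the rotation matrix `R = [[0,1],[−1,0]]` on a vector. -/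
noncomputable def rotR (v : Fin 2 → ℝ) : Fin 2 → ℝ := ![v 1, -(v 0)]

/-- Kronecker delta / 2×2 identity matrix entry. -/
noncomputable def idd2 (i j : Fin 2) : ℝ := if i = j then 1 else 0

lemma contDiff_pd2 {f : V2 → ℝ} (hf : ContDiff ℝ (⊤ : ℕ∞) f) (k : Fin 2) :
    ContDiff ℝ (⊤ : ℕ∞) (pd2 k f) := by
  unfold pd2
  exact (hf.fderiv_right (by simp)).clm_apply contDiff_const

lemma hasCompactSupport_pd2 {f : V2 → ℝ} (hc : HasCompactSupport f) (k : Fin 2) :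
    HasCompactSupport (pd2 k f) :=
  hc.fderiv_apply ℝ _

lemma memLp_pd2 {f : V2 → ℝ} (hf : ContDiff ℝ (⊤ : ℕ∞) f) (hc : HasCompactSupport f)
    (k : Fin 2) : MemLp (pd2 k f) 2 (volume : Measure V2) :=
  (contDiff_pd2 hf k).continuous.memLp_of_hasCompactSupport (hasCompactSupport_pd2 hc k)

lemma pd2_comm {f : V2 → ℝ} (hf : ContDiff ℝ (⊤ : ℕ∞) f) (k l : Fin 2) (x : V2) :
    pd2 k (pd2 l f) x = pd2 l (pd2 k f) x := by
  have hd : DifferentiableAt ℝ (fderiv ℝ f) x :=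
    ((hf.fderiv_right (m := 1) (by norm_cast)).differentiable (by norm_num)) x
  have h : ∀ v w : V2, fderiv ℝ (fun y => fderiv ℝ f y v) x w = fderiv ℝ (fderiv ℝ f) x w v := by
    intro v w
    rw [fderiv_clm_apply hd (differentiableAt_const v)]
    simp
  have hs : IsSymmSndFDerivAt ℝ f x :=
    hf.contDiffAt.isSymmSndFDerivAt (by simp; norm_cast)
  unfold pd2
  rw [h, h]
  exact hs _ _

lemma integral_pd2_mul_pd2 {f g : V2 → ℝ} (hf : ContDiff ℝ (⊤ : ℕ∞) f)
    (hcf : HasCompactSupport f) (hg : ContDiff ℝ (⊤ : ℕ∞) g) (k l : Fin 2) :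
    ∫ x, pd2 k f x * pd2 l g x = - ∫ x, f x * pd2 k (pd2 l g) x := by
  have hg' := contDiff_pd2 hg l
  have h := integral_mul_fderiv_eq_neg_fderiv_mul_of_integrable (μ := (volume : Measure V2))
    (f := f) (g := pd2 l g) (v := Pi.single k 1)
    (((contDiff_pd2 hf k).continuous.mul hg'.continuous).integrable_of_hasCompactSupport
      (hasCompactSupport_pd2 hcf k).mul_right)
    ((hf.continuous.mul (contDiff_pd2 hg' k).continuous).integrable_of_hasCompactSupport
      hcf.mul_right)
    ((hf.continuous.mul hg'.continuous).integrable_of_hasCompactSupport hcf.mul_right)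
    (fun x _ => (hf.differentiable (by simp)) x) (fun x _ => (hg'.differentiable (by simp)) x)
  change ∫ x, f x * pd2 k (pd2 l g) x = - ∫ x, pd2 k f x * pd2 l g x at h
  rw [h, neg_neg]

/-- The Jacobian determinant of two test functions is a null Lagrangian: integration by parts
turns both of its terms into `-∫ f ∂₁∂₂g`. -/
lemma integral_jacobian {f g : V2 → ℝ} (hf : ContDiff ℝ (⊤ : ℕ∞) f)
    (hcf : HasCompactSupport f) (hg : ContDiff ℝ (⊤ : ℕ∞) g) (hcg : HasCompactSupport g) :
    ∫ x, (pd2 0 f x * pd2 1 g x - pd2 1 f x * pd2 0 g x) = 0 := by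
  have hI : ∀ k l, Integrable fun x : V2 => pd2 k f x * pd2 l g x := fun k l =>
    (memLp_pd2 hf hcf k).integrable_mul (memLp_pd2 hg hcg l)
  rw [integral_sub (hI 0 1) (hI 1 0), integral_pd2_mul_pd2 hf hcf hg, integral_pd2_mul_pd2 hf hcf hg]
  simp_rw [pd2_comm hg 0 1]
  exact sub_self _

lemma young_lower {ε : ℝ} (hε : 0 < ε) (u v : ℝ) :
    (1 - ε) * u ^ 2 + (1 - 1 / ε) * v ^ 2 ≤ (u - v) ^ 2 := by
  have h : (u - v) ^ 2 - ((1 - ε) * u ^ 2 + (1 - 1 / ε) * v ^ 2) = (ε * u - v) ^ 2 / ε := by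
    field_simp
    ring
  have : 0 ≤ (ε * u - v) ^ 2 / ε := by positivity
  linarith

lemma young_upper {ε : ℝ} (hε : 0 < ε) (u v : ℝ) :
    (u - v) ^ 2 ≤ (1 + ε) * u ^ 2 + (1 + 1 / ε) * v ^ 2 := by
  have h : (1 + ε) * u ^ 2 + (1 + 1 / ε) * v ^ 2 - (u - v) ^ 2 = (ε * u + v) ^ 2 / ε := by
    field_simp
    ring
  have : 0 ≤ (ε * u + v) ^ 2 / ε := by positivity
  linarith

/-- For symmetric `σ`, `Rot σ = R Div σ - ∇⊥ tr σ`. -/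
lemma rot_eq {σ : V2 → Fin 2 → Fin 2 → ℝ} (hs : ∀ i j, ContDiff ℝ (⊤ : ℕ∞) fun y => σ y i j)
    (hsym : ∀ x, ∀ i j, σ x i j = σ x j i) (x : V2) (i : Fin 2) :
    RotM2 σ x i = rotR (DivM2 σ x) i - perpGrad (trM2 σ) x i := by
  have htr : ∀ k, pd2 k (trM2 σ) x = pd2 k (fun y => σ y 0 0) x + pd2 k (fun y => σ y 1 1) x := by
    intro k
    have : trM2 σ = (fun y => σ y 0 0) + (fun y => σ y 1 1) := by
      ext y; simp [trM2, Fin.sum_univ_two]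
    rw [this]
    unfold pd2
    rw [fderiv_add ((hs 0 0).differentiable (by simp) x) ((hs 1 1).differentiable (by simp) x)]
    rfl
  have h10 : (fun y => σ y 1 0) = fun y => σ y 0 1 := funext fun y => hsym y 1 0
  fin_cases i <;> simp [RotM2, rotR, perpGrad, DivM2, Fin.sum_univ_two, htr, h10]
  ring

/-- The integrated div-curl identity, row by row. -/
lemma integral_grad_sq {σ : V2 → Fin 2 → Fin 2 → ℝ}
    (hs : ∀ i j, ContDiff ℝ (⊤ : ℕ∞) fun y => σ y i j)
    (hcs : ∀ i j, HasCompactSupport fun y => σ y i j) :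
    ∫ x : V2, ∑ i, ∑ j, ∑ k, (pd2 k (fun y => σ y i j) x) ^ 2 =
      ∫ x : V2, ∑ i, ((DivM2 σ x i) ^ 2 + (RotM2 σ x i) ^ 2) := by
  have hD : Integrable fun x : V2 => ∑ i, ∑ j, ∑ k, (pd2 k (fun y => σ y i j) x) ^ 2 :=
    integrable_finsetSum _ fun i _ => integrable_finsetSum _ fun j _ =>
      integrable_finsetSum _ fun k _ => (memLp_pd2 (hs i j) (hcs i j) k).integrable_sq
  have hJ : ∀ i, Integrable fun x : V2 =>
      pd2 0 (fun y => σ y i 0) x * pd2 1 (fun y => σ y i 1) x -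
        pd2 1 (fun y => σ y i 0) x * pd2 0 (fun y => σ y i 1) x := fun i =>
    ((memLp_pd2 (hs i 0) (hcs i 0) 0).integrable_mul (memLp_pd2 (hs i 1) (hcs i 1) 1)).sub
      ((memLp_pd2 (hs i 0) (hcs i 0) 1).integrable_mul (memLp_pd2 (hs i 1) (hcs i 1) 0))
  have hN : ∫ x : V2, ∑ i, 2 * (pd2 0 (fun y => σ y i 0) x * pd2 1 (fun y => σ y i 1) x -
      pd2 1 (fun y => σ y i 0) x * pd2 0 (fun y => σ y i 1) x) = 0 := by
    rw [integral_finsetSum _ fun i _ => (hJ i).const_mul 2]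
    refine Finset.sum_eq_zero fun i _ => ?_
    rw [integral_const_mul, integral_jacobian (hs i 0) (hcs i 0) (hs i 1) (hcs i 1), mul_zero]
  rw [← add_zero (∫ x : V2, ∑ i, ∑ j, ∑ k, (pd2 k (fun y => σ y i j) x) ^ 2), ← hN,
    ← integral_add hD (integrable_finsetSum _ fun i _ => (hJ i).const_mul 2)]
  congr 1
  ext x
  simp only [DivM2, RotM2, Fin.sum_univ_two]
  ring

/-- **Norm equivalence for `‖Dσ‖_{L²}` in two dimensions.** For a smooth, compactly
supported, symmetric 2×2 matrix field `σ` on `ℝ²`: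
(i) for `1 < ε < 2`, `min{2−ε, 1−1/ε} ∫ (‖Div σ‖² + ‖∇ tr σ‖²) ≤ ∫ ‖Dσ‖²`;
(ii) for `ε > 0`, `∫ ‖Dσ‖² ≤ max{2+ε, 1+1/ε} ∫ (‖Div σ‖² + ‖∇ tr σ‖²)`. -/
theorem planar_norm_equivalence
    (σ : V2 → Fin 2 → Fin 2 → ℝ)
    (hσ : ContDiff ℝ (⊤ : ℕ∞) σ) (hc : HasCompactSupport σ)
    (hsym : ∀ x, ∀ i j, σ x i j = σ x j i) :
    (∀ ε : ℝ, 1 < ε → ε < 2 →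
      min (2 - ε) (1 - 1 / ε) *
          (∫ x : V2, (∑ i, (DivM2 σ x i) ^ 2) + ∑ i, (pd2 i (trM2 σ) x) ^ 2) ≤
        ∫ x : V2, ∑ i, ∑ j, ∑ k, (pd2 k (fun y => σ y i j) x) ^ 2) ∧
    (∀ ε : ℝ, 0 < ε →
      (∫ x : V2, ∑ i, ∑ j, ∑ k, (pd2 k (fun y => σ y i j) x) ^ 2) ≤
        max (2 + ε) (1 + 1 / ε) *
          ∫ x : V2, (∑ i, (DivM2 σ x i) ^ 2) + ∑ i, (pd2 i (trM2 σ) x) ^ 2) := by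
  have hs : ∀ i j, ContDiff ℝ (⊤ : ℕ∞) fun y => σ y i j := fun i j =>
    contDiff_pi.1 (contDiff_pi.1 hσ i) j
  have hcs : ∀ i j, HasCompactSupport fun y => σ y i j := fun i j =>
    hc.comp_left (g := fun m : Fin 2 → Fin 2 → ℝ => m i j) rfl
  have htr : ContDiff ℝ (⊤ : ℕ∞) (trM2 σ) := ContDiff.sum fun i _ => hs i i
  have hctr : HasCompactSupport (trM2 σ) :=
    hc.comp_left (g := fun m : Fin 2 → Fin 2 → ℝ => ∑ i, m i i) (by simp)
  have hDiv : ∀ i, MemLp (fun x => DivM2 σ x i) 2 (volume : Measure V2) := fun i =>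
    memLp_finsetSum _ fun j _ => memLp_pd2 (hs i j) (hcs i j) j
  have hRot : ∀ i, MemLp (fun x => RotM2 σ x i) 2 (volume : Measure V2) := fun i =>
    (memLp_pd2 (hs i 1) (hcs i 1) 0).sub (memLp_pd2 (hs i 0) (hcs i 0) 1)
  have hE : Integrable fun x : V2 => (∑ i, (DivM2 σ x i) ^ 2) + ∑ i, (pd2 i (trM2 σ) x) ^ 2 :=
    (integrable_finsetSum _ fun i _ => (hDiv i).integrable_sq).add
      (integrable_finsetSum _ fun i _ => (memLp_pd2 htr hctr i).integrable_sq)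
  have hF : Integrable fun x : V2 => ∑ i, ((DivM2 σ x i) ^ 2 + (RotM2 σ x i) ^ 2) :=
    integrable_finsetSum _ fun i _ => (hDiv i).integrable_sq.add (hRot i).integrable_sq
  rw [integral_grad_sq hs hcs]
  refine ⟨fun ε h1 _ => ?_, fun ε h0 => ?_⟩ <;> rw [← integral_const_mul]
  · refine integral_mono (hE.const_mul _) hF fun x => ?_
    have hm1 := min_le_left (2 - ε) (1 - 1 / ε)
    have hm2 := min_le_right (2 - ε) (1 - 1 / ε)
    have y0 := young_lower (by linarith : 0 < ε) (DivM2 σ x 1) (pd2 1 (trM2 σ) x)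
    have y1 := young_lower (by linarith : 0 < ε) (-DivM2 σ x 0) (-pd2 0 (trM2 σ) x)
    have m1 := mul_le_mul_of_nonneg_right hm1
      (by positivity : 0 ≤ DivM2 σ x 0 ^ 2 + DivM2 σ x 1 ^ 2)
    have m2 := mul_le_mul_of_nonneg_right hm2
      (by positivity : 0 ≤ pd2 0 (trM2 σ) x ^ 2 + pd2 1 (trM2 σ) x ^ 2)
    simp only [Fin.sum_univ_two, rot_eq hs hsym, rotR, perpGrad, Matrix.cons_val_zero,
      Matrix.cons_val_one]
    linarith
  · refine integral_mono hF (hE.const_mul _) fun x => ?_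
    have hm1 := le_max_left (2 + ε) (1 + 1 / ε)
    have hm2 := le_max_right (2 + ε) (1 + 1 / ε)
    have y0 := young_upper h0 (DivM2 σ x 1) (pd2 1 (trM2 σ) x)
    have y1 := young_upper h0 (-DivM2 σ x 0) (-pd2 0 (trM2 σ) x)
    have m1 := mul_le_mul_of_nonneg_right hm1
      (by positivity : 0 ≤ DivM2 σ x 0 ^ 2 + DivM2 σ x 1 ^ 2)
    have m2 := mul_le_mul_of_nonneg_right hm2
      (by positivity : 0 ≤ pd2 0 (trM2 σ) x ^ 2 + pd2 1 (trM2 σ) x ^ 2)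
    simp only [Fin.sum_univ_two, rot_eq hs hsym, rotR, perpGrad, Matrix.cons_val_zero,
      Matrix.cons_val_one]
    linarith
end
end
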